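/- Let d ≥ 2, μ > −1, and let n ≥ 1 be an odd integer. Then for every polynomial f in d variables of total degree at most n, Σ_{i=1}^d ‖√(1−‖x‖²) ∂_i f‖²_{μ,2} ≤ (n(n+2μ+d) − d + 1) ‖f‖²_{μ,2}, and the inequality is sharp: equality is attained by a nonzero polynomial of degree n. -/

import Mathlib

/-!
Write `T f = 2(μ+1) ⟨x,∇⟩f - (1-‖x‖²) Δf`. Integration by parts against the weight
`(1-‖x‖²)^(μ+1)`, which vanishes on the sphere, gives Green's identity
`∫ (T f) g W_μ = ∑ i, ∫ (1-‖x‖²) ∂_i f ∂_i g W_μ` (`wInt_negL_mul`). So `T` is symmetric on the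
finite-dimensional space of polynomials of degree at most `n` with the inner product of
`L²(W_μ)`, its quadratic form is the left-hand side of the inequality, and the theorem says that
the largest eigenvalue of `T` is `n(n+2μ+d) - d + 1`, with an eigenvector of degree exactly `n`.

*Upper bound.* If `T f = κ f` with `f` of degree `m`, the top homogeneous part `h` of `f` satisfies
`‖x‖² Δh = c h` with `c = κ - 2(μ+1)m`. Either `c = 0`, or `h = ‖x‖² g` where `g` is homogeneous of
degree `m-2` and again an eigenvector of `‖x‖² Δ`, with eigenvalue `c - 2d - 4(m-2)`. Descending,
`c ≤ m(m+d-2) - (d-1)` for odd `m` and `c ≤ m(m+d-2)` for even `m` (`rsq_lapl_eigenvalue_le`).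
Since `n` is odd, an even `m ≤ n` is at most `n-1`, and in all cases `κ ≤ n(n+2μ+d) - d + 1`.

*Sharpness.* On the span of `x₁ ‖x‖^(2k)`, `k ≤ (n-1)/2`, the operator `T` is bidiagonal, and
solving the two-term recursion for the coefficients gives an eigenvector of degree `n` with the
extremal eigenvalue (`exists_extremal`).

Integration by parts is carried out on the chords of the ball parallel to a coordinate axis, by the
one-dimensional fundamental theorem of calculus and Fubini: for `μ < 0` the function
`(1-‖x‖²)^(μ+1)` is only continuous at the sphere.
-/

open MeasureTheory Real MvPolynomial Finset
open scoped ENNReal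

noncomputable section

/-- The Euclidean norm of `x ∈ ℝ^d`. -/
def eunorm {d : ℕ} (x : Fin d → ℝ) : ℝ := Real.sqrt (∑ i, (x i) ^ 2)

/-- The closed unit ball `B^d = {x : ‖x‖ ≤ 1}` in `ℝ^d` (Euclidean norm). -/
def Bd (d : ℕ) : Set (Fin d → ℝ) := {x | eunorm x ≤ 1}

/-- The metric `d_B(x,y) = arccos(⟨x,y⟩ + √(1-‖x‖²)√(1-‖y‖²))` on the unit ball. -/
def distB {d : ℕ} (x y : Fin d → ℝ) : ℝ :=
  Real.arccos ((∑ i, x i * y i) +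
    Real.sqrt (1 - eunorm x ^ 2) * Real.sqrt (1 - eunorm y ^ 2))

/-- The metric ball `{y ∈ B^d : d_B(x,y) < r}`. -/
def ballB {d : ℕ} (x : Fin d → ℝ) (r : ℝ) : Set (Fin d → ℝ) :=
  {y | y ∈ Bd d ∧ distB x y < r}

/-- `W` is a doubling weight on the unit ball `B^d` with respect to the metric `d_B`. -/
def IsDoublingBall (d : ℕ) (W : (Fin d → ℝ) → ℝ) : Prop :=
  ∃ L > (0 : ℝ), ∀ x ∈ Bd d, ∀ r : ℝ, 0 < r →
    ∫ y in ballB x (2 * r), W y ≤ L * ∫ y in ballB x r, W y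

/-- The standard simplex `Δ^d = {x : x_i ≥ 0, x_1 + ⋯ + x_d ≤ 1}`. -/
def Td (d : ℕ) : Set (Fin d → ℝ) := {x | (∀ i, 0 ≤ x i) ∧ ∑ i, x i ≤ 1}

/-- The metric `d_Δ(x,y) = arccos(Σ √(x_i y_i) + √((1-|x|)(1-|y|)))` on the simplex. -/
def distT {d : ℕ} (x y : Fin d → ℝ) : ℝ :=
  Real.arccos ((∑ i, Real.sqrt (x i * y i)) +
    Real.sqrt ((1 - ∑ i, x i) * (1 - ∑ i, y i)))

/-- The metric ball `{y ∈ Δ^d : d_Δ(x,y) < r}`. -/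
def ballT {d : ℕ} (x : Fin d → ℝ) (r : ℝ) : Set (Fin d → ℝ) :=
  {y | y ∈ Td d ∧ distT x y < r}

/-- `W` is a doubling weight on the simplex `Δ^d` with respect to the metric `d_Δ`. -/
def IsDoublingSimplex (d : ℕ) (W : (Fin d → ℝ) → ℝ) : Prop :=
  ∃ L > (0 : ℝ), ∀ x ∈ Td d, ∀ r : ℝ, 0 < r →
    ∫ y in ballT x (2 * r), W y ≤ L * ∫ y in ballT x r, W y

/-- Weighted `L^p` norm on the unit ball: for `p < ∞` it is
`(∫_{B^d} |f|^p W)^{1/p}`, and for `p = ∞` the sup norm on `B^d`. -/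
def lpNormB (d : ℕ) (W : (Fin d → ℝ) → ℝ) (p : ℝ≥0∞) (f : (Fin d → ℝ) → ℝ) : ℝ :=
  if p = ⊤ then ⨆ x : Bd d, |f x.1|
  else (∫ x in Bd d, |f x| ^ p.toReal * W x) ^ (1 / p.toReal)

/-- Weighted `L^p` norm on the simplex: for `p < ∞` it is
`(∫_{Δ^d} |f|^p W)^{1/p}`, and for `p = ∞` the sup norm on `Δ^d`. -/
def lpNormT (d : ℕ) (W : (Fin d → ℝ) → ℝ) (p : ℝ≥0∞) (f : (Fin d → ℝ) → ℝ) : ℝ :=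
  if p = ⊤ then ⨆ x : Td d, |f x.1|
  else (∫ x in Td d, |f x| ^ p.toReal * W x) ^ (1 / p.toReal)

/-- Evaluation of a real polynomial in `d` variables at a point of `ℝ^d`. -/
def evalP {d : ℕ} (f : MvPolynomial (Fin d) ℝ) (x : Fin d → ℝ) : ℝ :=
  MvPolynomial.eval x f

/-- The angular derivative `D_{i,j} = x_i ∂_j − x_j ∂_i` acting on polynomials. -/
def Dpoly {d : ℕ} (i j : Fin d) (f : MvPolynomial (Fin d) ℝ) : MvPolynomial (Fin d) ℝ :=
  X i * pderiv j f - X j * pderiv i f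

/-- The classical weight `W_μ(x) = (1−‖x‖²)^μ` on the unit ball. -/
def Wmu (d : ℕ) (μ : ℝ) (x : Fin d → ℝ) : ℝ := (1 - eunorm x ^ 2) ^ μ

/-- The squared weighted `L²(W_μ, B^d)` norm `‖f‖²_{μ,2} = ∫_{B^d} f² W_μ`. -/
def sqNormMu (d : ℕ) (μ : ℝ) (f : (Fin d → ℝ) → ℝ) : ℝ :=
  ∫ x in Bd d, (f x) ^ 2 * Wmu d μ x

/-- The weighted `L²(W_μ, B^d)` norm `‖f‖_{μ,2}`. -/
def normMu (d : ℕ) (μ : ℝ) (f : (Fin d → ℝ) → ℝ) : ℝ :=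
  Real.sqrt (sqNormMu d μ f)

/-- `f ∈ 𝒱_n(W_μ, B^d)`: a polynomial of total degree at most `n`, orthogonal in
`L²(W_μ, B^d)` to every polynomial of total degree less than `n`. -/
def memV (d : ℕ) (μ : ℝ) (n : ℕ) (f : MvPolynomial (Fin d) ℝ) : Prop :=
  f.totalDegree ≤ n ∧ ∀ g : MvPolynomial (Fin d) ℝ, g.totalDegree < n →
    ∫ x in Bd d, evalP f x * evalP g x * Wmu d μ x = 0

/-- The spectral operator `𝒟_μ` acting on polynomials. -/
def DmuP (d : ℕ) (μ : ℝ) (f : MvPolynomial (Fin d) ℝ) : MvPolynomial (Fin d) ℝ :=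
  (∑ i, (1 - X i ^ 2) * pderiv i (pderiv i f))
    - 2 * (∑ i, ∑ j ∈ Finset.Ioi i, X i * X j * pderiv i (pderiv j f))
    - C ((d : ℝ) + 2 * μ + 1) * ∑ i, X i * pderiv i f

/-- The partial derivative `∂_i` of a function on `ℝ^d`. -/
def pd {d : ℕ} (i : Fin d) (f : (Fin d → ℝ) → ℝ) (x : Fin d → ℝ) : ℝ :=
  fderiv ℝ f x (Pi.single i 1)

/-- `⟨x,∇⟩f(x) = Σ_i x_i ∂_i f(x)`. -/
def xgrad {d : ℕ} (f : (Fin d → ℝ) → ℝ) (x : Fin d → ℝ) : ℝ :=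
  ∑ i, x i * pd i f x

/-- The angular derivative `D_{i,j} = x_i ∂_j − x_j ∂_i` acting on functions. -/
def DijF {d : ℕ} (i j : Fin d) (f : (Fin d → ℝ) → ℝ) (x : Fin d → ℝ) : ℝ :=
  x i * pd j f x - x j * pd i f x

/-- The spectral operator `𝒟_μ` acting on functions. -/
def DmuF (d : ℕ) (μ : ℝ) (f : (Fin d → ℝ) → ℝ) (x : Fin d → ℝ) : ℝ :=
  (∑ i, (1 - x i ^ 2) * pd i (pd i f) x)
    - 2 * (∑ i, ∑ j ∈ Finset.Ioi i, x i * x j * pd i (pd j f) x)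
    - ((d : ℝ) + 2 * μ + 1) * ∑ i, x i * pd i f x


/-! ### The operator `T` and its eigenvalues -/

/-- The polynomial `‖x‖² = ∑ i, x_i²`. -/
def rsq (d : ℕ) : MvPolynomial (Fin d) ℝ := ∑ i, X i ^ 2

/-- The Laplacian `Δ` on polynomials. -/
def lapl (d : ℕ) : MvPolynomial (Fin d) ℝ →ₗ[ℝ] MvPolynomial (Fin d) ℝ :=
  ∑ i, (pderiv i).toLinearMap ∘ₗ (pderiv i).toLinearMap

/-- The Euler operator `⟨x,∇⟩ = ∑ i, x_i ∂_i` on polynomials. -/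
def euler (d : ℕ) : MvPolynomial (Fin d) ℝ →ₗ[ℝ] MvPolynomial (Fin d) ℝ :=
  ∑ i, LinearMap.mulLeft ℝ (X i) ∘ₗ (pderiv i).toLinearMap

/-- The operator `T f = 2(μ+1) ⟨x,∇⟩f - (1-‖x‖²) Δf`, which equals
`-W_μ⁻¹ ∑ i, ∂_i((1-‖x‖²) W_μ ∂_i f)`. -/
def negL (d : ℕ) (μ : ℝ) : MvPolynomial (Fin d) ℝ →ₗ[ℝ] MvPolynomial (Fin d) ℝ :=
  (2 * (μ + 1)) • euler d - LinearMap.mulLeft ℝ (1 - rsq d) ∘ₗ lapl d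

lemma lapl_apply {d : ℕ} (f : MvPolynomial (Fin d) ℝ) :
    lapl d f = ∑ i, pderiv i (pderiv i f) := by
  simp [lapl]

lemma euler_apply {d : ℕ} (f : MvPolynomial (Fin d) ℝ) :
    euler d f = ∑ i, X i * pderiv i f := by
  simp [euler]

lemma negL_apply {d : ℕ} (μ : ℝ) (f : MvPolynomial (Fin d) ℝ) :
    negL d μ f = (2 * (μ + 1)) • euler d f - (1 - rsq d) * lapl d f := by
  simp [negL]

lemma pderiv_rsq {d : ℕ} (i : Fin d) : pderiv i (rsq d) = 2 * X i := by
  classical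
  rw [rsq, map_sum, Finset.sum_eq_single i]
  · simp
  · intro j _ hj
    simp [pderiv_X_of_ne hj]
  · simp

lemma lapl_rsq_mul {d : ℕ} (g : MvPolynomial (Fin d) ℝ) :
    lapl d (rsq d * g) = rsq d * lapl d g + 4 * euler d g + 2 * (d : MvPolynomial (Fin d) ℝ) * g := by
  have h : ∀ i, pderiv i (pderiv i (rsq d * g))
      = rsq d * pderiv i (pderiv i g) + 4 * (X i * pderiv i g) + 2 * g := by
    intro i
    have h2 : pderiv i (2 : MvPolynomial (Fin d) ℝ) = 0 := by
      rw [← map_ofNat C 2, pderiv_C]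
    simp only [pderiv_mul, pderiv_rsq, map_add, pderiv_X_self, h2]
    ring
  rw [lapl_apply, Finset.sum_congr rfl (fun i _ => h i), lapl_apply, euler_apply]
  simp only [Finset.sum_add_distrib, Finset.mul_sum, Finset.sum_const, Finset.card_univ,
    Fintype.card_fin, nsmul_eq_mul]
  ring

lemma rsq_ne_zero {d : ℕ} (hd : 2 ≤ d) : rsq d ≠ 0 := by
  intro h
  have := congrArg (eval (fun _ => (1 : ℝ))) h
  simp [rsq] at this
  omega

lemma isHomogeneous_rsq (d : ℕ) : (rsq d).IsHomogeneous 2 :=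
  IsHomogeneous.sum _ _ _ fun i _ => isHomogeneous_X_pow i 2

lemma isHomogeneous_lapl {d m : ℕ} {f : MvPolynomial (Fin d) ℝ} (hf : f.IsHomogeneous m) :
    (lapl d f).IsHomogeneous (m - 2) := by
  rw [lapl_apply]
  refine IsHomogeneous.sum _ _ _ fun i _ => ?_
  simpa [Nat.sub_sub] using hf.pderiv.pderiv

lemma lapl_eq_zero {d m : ℕ} (hm : m < 2) {f : MvPolynomial (Fin d) ℝ}
    (hf : f.IsHomogeneous m) : lapl d f = 0 := by
  rw [lapl_apply]
  refine Finset.sum_eq_zero fun i _ => ?_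
  have h : (pderiv i f).IsHomogeneous 0 := by
    have := hf.pderiv (i := i)
    rwa [show m - 1 = 0 by omega] at this
  have h' := (totalDegree_zero_iff_isHomogeneous _).2 h
  rw [totalDegree_eq_zero_iff_eq_C.1 h', pderiv_C]

lemma isHomogeneous_rsq_mul_lapl {d m : ℕ} {f : MvPolynomial (Fin d) ℝ}
    (hf : f.IsHomogeneous m) : (rsq d * lapl d f).IsHomogeneous m := by
  rcases lt_or_ge m 2 with hm | hm
  · rw [lapl_eq_zero hm hf, mul_zero]
    exact isHomogeneous_zero _ _ _
  · have := (isHomogeneous_rsq d).mul (isHomogeneous_lapl hf)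
    rwa [show 2 + (m - 2) = m by omega] at this

lemma euler_of_isHomogeneous {d m : ℕ} {f : MvPolynomial (Fin d) ℝ}
    (hf : f.IsHomogeneous m) : euler d f = (m : ℝ) • f := by
  rw [euler_apply, hf.sum_X_mul_pderiv, Nat.cast_smul_eq_nsmul]

/-- Bound for the eigenvalues of `‖x‖² Δ` on homogeneous polynomials of degree `m`, by descent on `m`:
an eigenvector with nonzero eigenvalue is `‖x‖²` times an eigenvector of degree `m - 2`. -/
lemma rsq_lapl_eigenvalue_le {d : ℕ} (hd : 2 ≤ d) (m : ℕ) :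
    ∀ (f : MvPolynomial (Fin d) ℝ) (c : ℝ), f.IsHomogeneous m → f ≠ 0 →
      rsq d * lapl d f = c • f →
      c ≤ m * (m + d - 2) - (if Odd m then (d : ℝ) - 1 else 0) := by
  have hd' : (2 : ℝ) ≤ d := by exact_mod_cast hd
  induction m using Nat.strong_induction_on with
  | _ m ih =>
  intro f c hf hf0 hc
  rcases eq_or_ne c 0 with rfl | hc0
  · split_ifs with h
    · have : (1 : ℝ) ≤ m := by exact_mod_cast h.pos
      nlinarith
    · rcases Nat.eq_zero_or_pos m with rfl | h
      · simp
      · have : (1 : ℝ) ≤ m := by exact_mod_cast h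
        nlinarith
  · have hm : 2 ≤ m := by
      by_contra hm
      rw [lapl_eq_zero (by omega) hf, mul_zero, eq_comm, smul_eq_zero] at hc
      tauto
    -- `f` is divisible by `‖x‖²`, and the quotient is again an eigenvector.
    set g := c⁻¹ • lapl d f with hg
    have hfg : f = rsq d * g := by
      rw [hg, mul_smul_comm, hc, smul_smul, inv_mul_cancel₀ hc0, one_smul]
    have hgh : g.IsHomogeneous (m - 2) := (homogeneousSubmodule (Fin d) ℝ (m - 2)).smul_mem _
      (isHomogeneous_lapl hf)
    have hg0 : g ≠ 0 := by
      intro h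
      rw [h, mul_zero] at hfg
      exact hf0 hfg
    have hlap : lapl d f = c • g := by
      rw [hg, smul_smul, mul_inv_cancel₀ hc0, one_smul]
    obtain ⟨k, rfl⟩ := Nat.exists_eq_add_of_le' hm
    rw [Nat.add_sub_cancel] at hgh
    have key : rsq d * lapl d g = (c - 2 * d - 4 * k) • g := by
      have h := lapl_rsq_mul g
      rw [← hfg, hlap, euler_of_isHomogeneous hgh] at h
      simp only [smul_eq_C_mul] at h ⊢
      simp only [map_sub, map_mul, map_natCast, map_ofNat] at h ⊢
      linear_combination -h
    have := ih k (by omega) g _ hgh hg0 key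
    have ho : Odd (k + 2) ↔ Odd k := by
      simp [Nat.odd_add]
    simp only [ho]
    push_cast
    linarith

/-- On homogeneous polynomials `T` splits into a degree-preserving part and `-Δ`. -/
lemma negL_of_isHomogeneous {d m : ℕ} (μ : ℝ) {f : MvPolynomial (Fin d) ℝ}
    (hf : f.IsHomogeneous m) :
    negL d μ f = ((2 * (μ + 1) * m) • f + rsq d * lapl d f) - lapl d f := by
  rw [negL_apply, euler_of_isHomogeneous hf, smul_smul]
  ring

lemma totalDegree_negL_le {d m : ℕ} (μ : ℝ) {f : MvPolynomial (Fin d) ℝ}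
    (hf : f.totalDegree ≤ m) : (negL d μ f).totalDegree ≤ m := by
  rw [← mem_restrictTotalDegree, ← sum_homogeneousComponent f, map_sum]
  refine Submodule.sum_mem _ fun k hk => ?_
  have hk' : k ≤ m := by
    have := Finset.mem_range.1 hk
    omega
  have hh := homogeneousComponent_isHomogeneous k f
  rw [negL_of_isHomogeneous μ hh]
  refine Submodule.sub_mem _ (Submodule.add_mem _ (Submodule.smul_mem _ _ ?_) ?_) ?_ <;>
    rw [mem_restrictTotalDegree]
  · exact hh.totalDegree_le.trans hk'
  · exact (isHomogeneous_rsq_mul_lapl hh).totalDegree_le.trans hk'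
  · exact (isHomogeneous_lapl hh).totalDegree_le.trans (by omega)

lemma homogeneousComponent_negL {d m : ℕ} (μ : ℝ) {f : MvPolynomial (Fin d) ℝ}
    (hf : f.totalDegree = m) :
    homogeneousComponent m (negL d μ f) = (2 * (μ + 1) * m) • homogeneousComponent m f
      + rsq d * lapl d (homogeneousComponent m f) := by
  have e1 : negL d μ f = ∑ k ∈ Finset.range (m + 1), negL d μ (homogeneousComponent k f) := by
    conv_lhs => rw [← sum_homogeneousComponent f, map_sum, hf]
  rw [e1, map_sum, Finset.sum_eq_single m]
  · have hh := homogeneousComponent_isHomogeneous m f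
    rw [negL_of_isHomogeneous μ hh, map_sub]
    rw [homogeneousComponent_of_mem (n := m) (m := m) ((homogeneousSubmodule _ _ _).add_mem
      ((homogeneousSubmodule _ _ _).smul_mem _ hh) (isHomogeneous_rsq_mul_lapl hh))]
    rcases lt_or_ge m 2 with h2 | h2
    · rw [lapl_eq_zero h2 hh]; simp
    · rw [homogeneousComponent_of_mem (isHomogeneous_lapl hh), if_pos rfl, if_neg (by omega),
        sub_zero]
  · intro k hk hkm
    have hk' : k < m := by
      have := Finset.mem_range.1 hk
      omega
    exact homogeneousComponent_eq_zero _ _ ((totalDegree_negL_le μ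
      (homogeneousComponent_isHomogeneous k f).totalDegree_le).trans_lt hk')
  · intro h
    simp at h

lemma homogeneousComponent_totalDegree_ne_zero {d : ℕ} {f : MvPolynomial (Fin d) ℝ} (hf : f ≠ 0) :
    homogeneousComponent f.totalDegree f ≠ 0 := by
  intro h
  obtain ⟨s, hs, hs'⟩ := Finset.exists_mem_eq_sup f.support
    (by simpa using hf) (fun s => s.sum fun _ e => e)
  have := congrArg (coeff s) h
  rw [coeff_homogeneousComponent, if_pos, coeff_zero] at this
  · exact (mem_support_iff.1 hs) this
  · rw [totalDegree, hs']; rfl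

lemma negL_eigenvalue_le {d n : ℕ} (hd : 2 ≤ d) {μ : ℝ} (hμ : -1 < μ) (hn : Odd n)
    {f : MvPolynomial (Fin d) ℝ} (hf0 : f ≠ 0) (hfn : f.totalDegree ≤ n) {κ : ℝ}
    (hκ : negL d μ f = κ • f) : κ ≤ n * (n + 2 * μ + d) - d + 1 := by
  obtain ⟨m, hm⟩ : ∃ m, f.totalDegree = m := ⟨_, rfl⟩
  have h := homogeneousComponent_negL μ hm
  have h0 := homogeneousComponent_totalDegree_ne_zero hf0
  rw [hm] at h0 hfn
  rw [hκ, map_smul] at h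
  have hb := rsq_lapl_eigenvalue_le hd m _ (κ - 2 * (μ + 1) * m)
    (homogeneousComponent_isHomogeneous m f) h0 (by rw [sub_smul, h]; abel)
  have hd' : (2 : ℝ) ≤ d := by exact_mod_cast hd
  have hmn : (m : ℝ) ≤ n := by exact_mod_cast hfn
  have hm0 : (0 : ℝ) ≤ m := by positivity
  split_ifs at hb with ho
  · nlinarith [mul_nonneg (sub_nonneg.2 hmn) (show (0 : ℝ) ≤ n + m + 2 * μ + d by linarith)]
  -- For even `m` the saving `d - 1` comes from `m ≤ n - 1` instead, as `n` is odd.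
  · have hmn1 : (m : ℝ) + 1 ≤ n := by
      have : m ≠ n := by rintro rfl; exact ho hn
      exact_mod_cast (by omega : m + 1 ≤ n)
    nlinarith [mul_nonneg (sub_nonneg.2 hmn1) (show (0 : ℝ) ≤ n + m + 2 * μ + d by linarith)]

/-! ### The extremal polynomial -/

/-- Coefficients `a_k` of the extremal polynomial `∑ k, a_k x_i ‖x‖^(2k)`. They solve
`a_{k+1} c_{k+1} = a_k (e_k - lam)`, where `e_k = 2k(2k+d) + 2(μ+1)(2k+1)` is the diagonal entry of
`T` at `x_i ‖x‖^(2k)` and `c_k = 2k(2k+d)` comes from `Δ(x_i ‖x‖^(2k)) = c_k x_i ‖x‖^(2k-2)`. -/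
def coefU (d : ℕ) (μ lam : ℝ) : ℕ → ℝ
  | 0 => 1
  | k + 1 => coefU d μ lam k * ((2 * k * (2 * k + d) + 2 * (μ + 1) * (2 * k + 1)) - lam)
      / (2 * (k + 1) * (2 * (k + 1) + d))

lemma isHomogeneous_U {d : ℕ} (i : Fin d) (k : ℕ) : (X i * rsq d ^ k).IsHomogeneous (2 * k + 1) := by
  have := (isHomogeneous_X ℝ i).mul ((isHomogeneous_rsq d).pow k)
  rwa [add_comm] at this

lemma lapl_U {d : ℕ} (i : Fin d) (k : ℕ) : lapl d (X i * rsq d ^ (k + 1))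
    = (2 * (k + 1) * (2 * (k + 1) + d) : ℝ) • (X i * rsq d ^ k) := by
  induction k with
  | zero =>
    have := lapl_rsq_mul (X i : MvPolynomial (Fin d) ℝ)
    rw [lapl_eq_zero one_lt_two (isHomogeneous_X ℝ i),
      euler_of_isHomogeneous (isHomogeneous_X ℝ i)] at this
    rw [zero_add, pow_one, mul_comm, this]
    simp only [smul_eq_C_mul, map_add, map_mul, map_natCast, map_ofNat, map_one, map_zero,
      Nat.cast_zero, Nat.cast_one]
    ring
  | succ k ih =>
    have := lapl_rsq_mul (X i * rsq d ^ (k + 1))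
    rw [ih, euler_of_isHomogeneous (isHomogeneous_U i (k + 1))] at this
    rw [show X i * rsq d ^ (k + 1 + 1) = rsq d * (X i * rsq d ^ (k + 1)) by ring, this]
    push_cast
    simp only [smul_eq_C_mul, map_add, map_mul, map_natCast, map_ofNat, map_one]
    ring

lemma negL_U {d : ℕ} (μ : ℝ) (i : Fin d) (k : ℕ) : negL d μ (X i * rsq d ^ (k + 1))
    = (2 * (k + 1) * (2 * (k + 1) + d) + 2 * (μ + 1) * (2 * (k + 1) + 1) : ℝ) •
        (X i * rsq d ^ (k + 1))
      - (2 * (k + 1) * (2 * (k + 1) + d) : ℝ) • (X i * rsq d ^ k) := by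
  rw [negL_of_isHomogeneous μ (isHomogeneous_U i (k + 1)), lapl_U]
  push_cast
  simp only [smul_eq_C_mul, map_add, map_mul, map_natCast, map_ofNat, map_one]
  ring

/-- The partial sums are eigenvectors up to an error in the last term, whose factor `e_N - lam`
vanishes for `lam = e_N`. -/
lemma negL_partial {d : ℕ} (μ lam : ℝ) (i : Fin d) (N : ℕ) :
    negL d μ (∑ k ∈ Finset.range (N + 1), coefU d μ lam k • (X i * rsq d ^ k))
      = lam • (∑ k ∈ Finset.range (N + 1), coefU d μ lam k • (X i * rsq d ^ k))
        + (coefU d μ lam N * ((2 * N * (2 * N + d) + 2 * (μ + 1) * (2 * N + 1)) - lam)) •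
          (X i * rsq d ^ N) := by
  induction N with
  | zero =>
    have h := isHomogeneous_X ℝ i
    simp [coefU, negL_of_isHomogeneous μ h, lapl_eq_zero one_lt_two h, sub_smul]
  | succ N ih =>
    rw [Finset.sum_range_succ, map_add, ih, map_smul, negL_U]
    have hc : coefU d μ lam N * ((2 * N * (2 * N + d) + 2 * (μ + 1) * (2 * N + 1)) - lam)
      = coefU d μ lam (N + 1) * (2 * (N + 1) * (2 * (N + 1) + d)) := by
      rw [coefU]
      field_simp
    rw [hc]
    push_cast
    module

lemma coefU_ne_zero {d : ℕ} {μ : ℝ} (hμ : -1 < μ) (N : ℕ) (k : ℕ) (hk : k ≤ N) :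
    coefU d μ (2 * N * (2 * N + d) + 2 * (μ + 1) * (2 * N + 1)) k ≠ 0 := by
  induction k with
  | zero => simp [coefU]
  | succ k ih =>
    rw [coefU]
    refine div_ne_zero (mul_ne_zero (ih (by omega)) ?_) (by positivity)
    have h1 : (k : ℝ) + 1 ≤ N := by exact_mod_cast hk
    have h2 : (0 : ℝ) ≤ k := by positivity
    have h3 : (0 : ℝ) ≤ d := by positivity
    apply ne_of_lt
    nlinarith [mul_nonneg (show (0 : ℝ) ≤ N - k by linarith) h3]

lemma exists_extremal {d n : ℕ} (hd : 2 ≤ d) {μ : ℝ} (hμ : -1 < μ) (hn : Odd n) :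
    ∃ f : MvPolynomial (Fin d) ℝ, f ≠ 0 ∧ f.totalDegree = n ∧
      negL d μ f = ((n : ℝ) * (n + 2 * μ + d) - d + 1) • f := by
  obtain ⟨N, rfl⟩ := hn
  set lam : ℝ := 2 * N * (2 * N + d) + 2 * (μ + 1) * (2 * N + 1) with hlam
  let i : Fin d := ⟨0, by omega⟩
  set f : MvPolynomial (Fin d) ℝ :=
    ∑ k ∈ Finset.range (N + 1), coefU d μ lam k • (X i * rsq d ^ k) with hf
  have hcomp : homogeneousComponent (2 * N + 1) f = coefU d μ lam N • (X i * rsq d ^ N) := by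
    rw [hf, map_sum, Finset.sum_eq_single N]
    · rw [map_smul, homogeneousComponent_of_mem (isHomogeneous_U i N), if_pos rfl]
    · intro k _ hk
      rw [map_smul, homogeneousComponent_of_mem (isHomogeneous_U i k), if_neg (by omega),
        smul_zero]
    · simp
  have hne : homogeneousComponent (2 * N + 1) f ≠ 0 := by
    rw [hcomp]
    exact smul_ne_zero (coefU_ne_zero hμ N N le_rfl)
      (mul_ne_zero (X_ne_zero i) (pow_ne_zero _ (rsq_ne_zero hd)))
  refine ⟨f, ?_, le_antisymm ?_ ?_, ?_⟩
  · intro h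
    rw [h, map_zero] at hne
    exact hne rfl
  · rw [← mem_restrictTotalDegree]
    refine Submodule.sum_mem _ fun k hk => Submodule.smul_mem _ _ ?_
    rw [mem_restrictTotalDegree]
    have := Finset.mem_range.1 hk
    exact (isHomogeneous_U i k).totalDegree_le.trans (by omega)
  · by_contra h
    exact hne (homogeneousComponent_eq_zero _ _ (not_le.1 h))
  · rw [hf, negL_partial, ← hlam, sub_self, mul_zero, zero_smul, add_zero]
    congr 1
    rw [hlam]
    push_cast
    ring

/-! ### Eigenvalue bound for a symmetric operator -/

/-- If a linear map is symmetric for a positive definite form on a finite-dimensional real space and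
all its eigenvalues are at most `lam`, then its quadratic form is at most `lam` times the form. -/
lemma symm_bound {V : Type*} [AddCommGroup V] [Module ℝ V] [FiniteDimensional ℝ V]
    (B : V → V → ℝ) (hsymm : ∀ x y, B x y = B y x)
    (hadd : ∀ x y z, B (x + y) z = B x z + B y z) (hsmul : ∀ (r : ℝ) x y, B (r • x) y = r * B x y)
    (hpos : ∀ x, x ≠ 0 → 0 < B x x) (T : V →ₗ[ℝ] V) (hT : ∀ x y, B (T x) y = B x (T y))
    (lam : ℝ) (hlam : ∀ (x : V) (κ : ℝ), x ≠ 0 → T x = κ • x → κ ≤ lam) (x : V) :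
    B (T x) x ≤ lam * B x x := by
  have hz : B 0 0 = 0 := by simpa using hsmul 0 0 0
  let core : InnerProductSpace.Core ℝ V :=
    { inner := B
      conj_inner_symm := fun x y => by simp [hsymm x y]
      re_inner_nonneg := fun x => by
        rcases eq_or_ne x 0 with rfl | h
        · simp [hz]
        · simpa using (hpos x h).le
      add_left := hadd
      smul_left := fun x y r => by simp [hsmul]
      definite := fun x h => by
        by_contra h0
        exact (hpos x h0).ne' h }
  let _ : NormedAddCommGroup V := core.toNormedAddCommGroup
  let _ : InnerProductSpace ℝ V := InnerProductSpace.ofCore core.toCore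
  have hTs : T.IsSymmetric := fun x y => hT x y
  let b := hTs.eigenvectorBasis rfl
  change inner ℝ (T x) x ≤ lam * inner ℝ x x
  rw [← b.sum_inner_mul_inner (T x) x, ← b.sum_inner_mul_inner x x, Finset.mul_sum]
  refine Finset.sum_le_sum fun i _ => ?_
  have he := hTs.hasEigenvector_eigenvectorBasis rfl i
  have hle : hTs.eigenvalues rfl i ≤ lam := hlam _ _ he.2 (hTs.apply_eigenvectorBasis rfl i)
  have h1 : inner ℝ (T x) (b i) = hTs.eigenvalues rfl i * inner ℝ x (b i) := by
    rw [hTs x (b i), hTs.apply_eigenvectorBasis rfl i]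
    simp [inner_smul_right, b]
  rw [h1, real_inner_comm x (b i), mul_assoc]
  exact mul_le_mul_of_nonneg_right hle (mul_self_nonneg _)

/-! ### The weighted integral over the ball -/

lemma eunorm_sq {d : ℕ} (x : Fin d → ℝ) : eunorm x ^ 2 = ∑ i, x i ^ 2 :=
  Real.sq_sqrt (Finset.sum_nonneg fun _ _ => sq_nonneg _)

lemma eunorm_eq_norm {d : ℕ} (x : Fin d → ℝ) : eunorm x = ‖WithLp.toLp 2 x‖ := by
  simp [eunorm, EuclideanSpace.norm_eq]

lemma continuous_eunorm {d : ℕ} : Continuous (eunorm : (Fin d → ℝ) → ℝ) := by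
  unfold eunorm
  fun_prop

lemma continuous_evalP {d : ℕ} (p : MvPolynomial (Fin d) ℝ) : Continuous (evalP p) :=
  MvPolynomial.continuous_eval p

lemma mem_Bd_iff {d : ℕ} (x : Fin d → ℝ) : x ∈ Bd d ↔ ∑ i, x i ^ 2 ≤ 1 := by
  rw [← eunorm_sq]
  exact (sq_le_one_iff₀ (Real.sqrt_nonneg _)).symm

lemma isCompact_Bd (d : ℕ) : IsCompact (Bd d) := by
  refine Metric.isCompact_of_isClosed_isBounded
    (isClosed_le continuous_eunorm continuous_const) ?_
  refine (Metric.isBounded_closedBall (x := (0 : Fin d → ℝ)) (r := 1)).subset fun x hx => ?_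
  rw [mem_closedBall_zero_iff, pi_norm_le_iff_of_nonneg zero_le_one]
  intro i
  rw [mem_Bd_iff] at hx
  have := (Finset.single_le_sum (fun j _ => sq_nonneg (x j)) (Finset.mem_univ i)).trans hx
  exact (sq_le_one_iff_abs_le_one _).1 this

/-- The radial integrability of `W_μ`: near `y = 1` it reduces to that of `(1 - y)^μ`. -/
lemma integrableOn_one_sub_rpow {μ : ℝ} (hμ : -1 < μ) (k : ℕ) :
    IntegrableOn (fun y : ℝ => y ^ k • (1 - y ^ 2) ^ μ) (Set.Ioo 0 1) := by
  have h1 : IntegrableOn (fun y : ℝ => (1 - y) ^ μ) (Set.Icc 0 1) := by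
    have := (intervalIntegral.intervalIntegrable_rpow' (a := 0) (b := 1) hμ).comp_sub_left 1
    rw [sub_zero, sub_self] at this
    rw [← Set.uIcc_of_le zero_le_one, ← intervalIntegrable_iff']
    exact this.symm
  have h2 : IntegrableOn (fun y : ℝ => (y ^ k * (1 + y) ^ μ) * (1 - y) ^ μ) (Set.Icc 0 1) := by
    refine IntegrableOn.continuousOn_mul ?_ h1 isCompact_Icc
    refine (continuousOn_pow k).mul (ContinuousOn.rpow_const (by fun_prop) fun y hy => Or.inl ?_)
    have := hy.1
    positivity
  refine (h2.mono_set Set.Ioo_subset_Icc_self).congr_fun (fun y hy => ?_) measurableSet_Ioo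
  have h3 : 0 ≤ 1 + y := by linarith [hy.1]
  have h4 : 0 ≤ 1 - y := by linarith [hy.2]
  change y ^ k * (1 + y) ^ μ * (1 - y) ^ μ = y ^ k * (1 - y ^ 2) ^ μ
  rw [mul_assoc, ← Real.mul_rpow h3 h4]
  ring_nf

lemma integrableOn_Wmu {d : ℕ} (hd : 2 ≤ d) {μ : ℝ} (hμ : -1 < μ) :
    IntegrableOn (Wmu d μ) (Bd d) := by
  have : Nonempty (Fin d) := ⟨⟨0, by omega⟩⟩
  have h := (integrableOn_fun_norm_addHaar (E := EuclideanSpace ℝ (Fin d)) volume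
    (f := fun r : ℝ => (1 - r ^ 2) ^ μ) (r := 1)).2 (integrableOn_one_sub_rpow hμ _)
  have h' : IntegrableOn (fun x : EuclideanSpace ℝ (Fin d) => (1 - ‖x‖ ^ 2) ^ μ)
      (Metric.closedBall 0 1) := by
    rw [← Metric.ball_union_sphere]
    refine h.union ?_
    rw [IntegrableOn, Measure.restrict_eq_zero.2 (Measure.addHaar_sphere _ _ _)]
    exact integrable_zero_measure
  have e := (PiLp.volume_preserving_toLp (Fin d)).integrableOn_comp_preimage
    (MeasurableEquiv.toLp 2 (Fin d → ℝ)).measurableEmbedding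
    (f := fun x : EuclideanSpace ℝ (Fin d) => (1 - ‖x‖ ^ 2) ^ μ) (s := Metric.closedBall 0 1)
  have h2 := e.2 h'
  have hs : (WithLp.toLp 2 : (Fin d → ℝ) → EuclideanSpace ℝ (Fin d)) ⁻¹' Metric.closedBall 0 1
      = Bd d := by
    ext x
    simp [Bd, eunorm_eq_norm]
  rw [hs] at h2
  refine h2.congr_fun (fun x _ => ?_) (isCompact_Bd d).measurableSet
  simp [Wmu, eunorm_eq_norm]

lemma integrableOn_evalP_mul {d : ℕ} (hd : 2 ≤ d) {μ : ℝ} (hμ : -1 < μ)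
    (p : MvPolynomial (Fin d) ℝ) : IntegrableOn (fun x => evalP p x * Wmu d μ x) (Bd d) :=
  (integrableOn_Wmu hd hμ).continuousOn_mul (continuous_evalP p).continuousOn (isCompact_Bd d)

/-- The linear functional `p ↦ ∫_{B^d} p W_μ` on polynomials. The hypotheses `2 ≤ d` and `-1 < μ`
are arguments because linearity rests on integrability of `W_μ`. -/
def wInt {d : ℕ} (hd : 2 ≤ d) {μ : ℝ} (hμ : -1 < μ) : MvPolynomial (Fin d) ℝ →ₗ[ℝ] ℝ where
  toFun p := ∫ x in Bd d, evalP p x * Wmu d μ x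
  map_add' p q := by
    rw [← integral_add (integrableOn_evalP_mul hd hμ p) (integrableOn_evalP_mul hd hμ q)]
    simp [evalP, add_mul]
  map_smul' c p := by
    rw [RingHom.id_apply, smul_eq_mul, ← integral_const_mul]
    simp [evalP, mul_assoc]

lemma wInt_apply {d : ℕ} (hd : 2 ≤ d) {μ : ℝ} (hμ : -1 < μ) (p : MvPolynomial (Fin d) ℝ) :
    wInt hd hμ p = ∫ x in Bd d, evalP p x * Wmu d μ x := rfl

lemma Wmu_nonneg {d : ℕ} (μ : ℝ) {x : Fin d → ℝ} (hx : x ∈ Bd d) : 0 ≤ Wmu d μ x := by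
  rw [mem_Bd_iff] at hx
  refine Real.rpow_nonneg ?_ _
  rw [eunorm_sq]
  linarith

lemma wInt_sq_pos {d : ℕ} (hd : 2 ≤ d) {μ : ℝ} (hμ : -1 < μ) {p : MvPolynomial (Fin d) ℝ}
    (hp : p ≠ 0) : 0 < wInt hd hμ (p * p) := by
  have hnn : 0 ≤ᵐ[volume.restrict (Bd d)] fun x => evalP (p * p) x * Wmu d μ x := by
    refine (ae_restrict_iff' (isCompact_Bd d).measurableSet).2 (Filter.Eventually.of_forall
      fun x hx => ?_)
    have : evalP (p * p) x = evalP p x * evalP p x := by simp [evalP]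
    change 0 ≤ evalP (p * p) x * Wmu d μ x
    rw [this]
    exact mul_nonneg (mul_self_nonneg _) (Wmu_nonneg μ hx)
  rw [wInt_apply, setIntegral_pos_iff_support_of_nonneg_ae hnn (integrableOn_evalP_mul hd hμ _)]
  have hopen : IsOpen {x : Fin d → ℝ | evalP p x ≠ 0 ∧ eunorm x < 1} :=
    (isOpen_ne_fun (continuous_evalP p) continuous_const).inter
      (isOpen_lt continuous_eunorm continuous_const)
  have hd0 : (0 : ℝ) < d := by exact_mod_cast (by omega : 0 < d)
  have hne : {x : Fin d → ℝ | evalP p x ≠ 0 ∧ eunorm x < 1}.Nonempty := by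
    by_contra hcon
    apply hp
    refine MvPolynomial.funext_set (fun _ => Set.Ioo (0 : ℝ) (1 / d))
      (fun _ => Set.Ioo_infinite (by positivity)) fun x hx => ?_
    rw [map_zero]
    by_contra hx0
    refine hcon ⟨x, hx0, ?_⟩
    have hlt : ∑ i, x i ^ 2 < 1 := by
      calc ∑ i, x i ^ 2 < ∑ _i : Fin d, (1 / d : ℝ) := by
            refine Finset.sum_lt_sum_of_nonempty ⟨⟨0, by omega⟩, Finset.mem_univ _⟩ fun i _ => ?_
            have h1 := (hx i (Set.mem_univ i)).1
            have h2 := (hx i (Set.mem_univ i)).2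
            have h3 : (1 / d : ℝ) ≤ 1 := by
              rw [div_le_one hd0]
              exact_mod_cast (by omega : 1 ≤ d)
            nlinarith
        _ = 1 := by
            simp [hd0.ne']
    rw [← eunorm_sq] at hlt
    exact (sq_lt_one_iff₀ (Real.sqrt_nonneg _)).1 hlt
  refine (hopen.measure_pos volume hne).trans_le (measure_mono fun x hx => ⟨?_, hx.2.le⟩)
  have h1 : (0 : ℝ) < 1 - eunorm x ^ 2 := by
    have := (sq_lt_one_iff₀ (Real.sqrt_nonneg _)).2 hx.2
    rw [eunorm]
    linarith
  have h2 : evalP (p * p) x = evalP p x * evalP p x := by simp [evalP]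
  rw [Function.mem_support, h2]
  exact mul_ne_zero (mul_ne_zero hx.1 hx.1) (Real.rpow_pos_of_pos h1 μ).ne'

lemma hasDerivAt_evalP_insertNth {d : ℕ} (i : Fin (d + 1)) (y : Fin d → ℝ) (t : ℝ)
    (p : MvPolynomial (Fin (d + 1)) ℝ) :
    HasDerivAt (fun t => evalP p (i.insertNth t y)) (evalP (pderiv i p) (i.insertNth t y)) t := by
  unfold evalP
  induction p using MvPolynomial.induction_on with
  | C a => simpa using hasDerivAt_const t a
  | add p q hp hq => simpa using hp.fun_add hq
  | mul_X p j hp =>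
    have hX : HasDerivAt (fun t => (i.insertNth t y : Fin (d + 1) → ℝ) j)
        (eval (i.insertNth t y) (pderiv i (X j))) t := by
      rcases eq_or_ne j i with rfl | hj
      · simpa using hasDerivAt_id' t
      · obtain ⟨k, rfl⟩ := Fin.exists_succAbove_eq hj
        simpa [pderiv_X_of_ne hj] using hasDerivAt_const t (y k)
    simpa [pderiv_mul, mul_comm, add_comm] using hp.fun_mul hX

/-- The integral of `∂_i (p (1-‖x‖²)^(μ+1))` over a chord of the ball parallel to the `i`-th axis
vanishes. No integrability is assumed, since otherwise the integral is zero by convention. -/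
lemma slice_integral_eq_zero {d : ℕ} {μ : ℝ} (hμ : -1 < μ) (i : Fin (d + 1))
    (p : MvPolynomial (Fin (d + 1)) ℝ) (y : Fin d → ℝ) :
    ∫ t, (Bd (d + 1)).indicator (fun x => (evalP (pderiv i p) x * (1 - eunorm x ^ 2)
      - 2 * (μ + 1) * (x i * evalP p x)) * Wmu (d + 1) μ x) (i.insertNth t y) = 0 := by
  set A : ℝ := 1 - ∑ j, y j ^ 2 with hA
  have hnorm : ∀ t : ℝ, 1 - eunorm (i.insertNth t y : Fin (d + 1) → ℝ) ^ 2 = A - t ^ 2 := by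
    intro t
    rw [eunorm_sq, Fin.sum_univ_succAbove _ i]
    simp [hA]
    ring
  have hmem : ∀ t : ℝ, (i.insertNth t y : Fin (d + 1) → ℝ) ∈ Bd (d + 1) ↔ t ^ 2 ≤ A := by
    intro t
    have := hnorm t
    rw [mem_Bd_iff, ← eunorm_sq]
    constructor <;> intro h <;> linarith
  rcases lt_or_ge A 0 with hA0 | hA0
  · refine integral_eq_zero_of_ae (Filter.Eventually.of_forall fun t => ?_)
    refine Set.indicator_of_notMem ?_ _
    rw [hmem]
    nlinarith [sq_nonneg t]
  set b := Real.sqrt A with hb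
  have hb0 : 0 ≤ b := Real.sqrt_nonneg _
  have hbA : b ^ 2 = A := Real.sq_sqrt hA0
  let g : ℝ → ℝ := fun t => evalP (pderiv i p) (i.insertNth t y) * (A - t ^ 2) ^ (μ + 1)
      + evalP p (i.insertNth t y) * (-(2 * t) * (μ + 1) * (A - t ^ 2) ^ μ)
  have hind : (fun t => (Bd (d + 1)).indicator (fun x => (evalP (pderiv i p) x * (1 - eunorm x ^ 2)
      - 2 * (μ + 1) * (x i * evalP p x)) * Wmu (d + 1) μ x) (i.insertNth t y))
      =ᵐ[volume] (Set.Ioo (-b) b).indicator g := by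
    -- The endpoints are discarded, as for `μ = 0` the two sides need not agree there.
    have hnull : ∀ᵐ t : ℝ, t ∉ ({-b, b} : Set ℝ) :=
      (Set.Finite.measure_zero (Set.toFinite _) volume : _) |> measure_eq_zero_iff_ae_notMem.1
    filter_upwards [hnull] with t ht
    simp only [Set.mem_insert_iff, Set.mem_singleton_iff, not_or] at ht
    by_cases h : t ∈ Set.Ioo (-b) b
    · have hpos : 0 < A - t ^ 2 := by nlinarith [h.1, h.2]
      rw [Set.indicator_of_mem h, Set.indicator_of_mem ((hmem t).2 (by linarith))]
      simp only [Wmu, hnorm, Fin.insertNth_apply_same, g]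
      rw [Real.rpow_add_one hpos.ne']
      ring
    · rw [Set.indicator_of_notMem h, Set.indicator_of_notMem]
      rw [hmem, ← hbA]
      exact fun hle => h ⟨lt_of_le_of_ne (abs_le_of_sq_le_sq' hle hb0).1 (Ne.symm ht.1),
        lt_of_le_of_ne (abs_le_of_sq_le_sq' hle hb0).2 ht.2⟩
  rw [integral_congr_ae hind, integral_indicator measurableSet_Ioo, ← integral_Ioc_eq_integral_Ioo,
    ← intervalIntegral.integral_of_le (by linarith)]
  by_cases hInt : IntervalIntegrable g volume (-b) b
  · rw [intervalIntegral.integral_eq_sub_of_hasDerivAt_of_le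
      (f := fun t => evalP p (i.insertNth t y) * (A - t ^ 2) ^ (μ + 1)) (by linarith) ?_ ?_ hInt]
    · simp [hbA, Real.zero_rpow (by linarith : μ + 1 ≠ 0)]
    · refine Continuous.continuousOn (Continuous.mul ?_ ?_)
      · exact continuous_iff_continuousAt.2 fun t =>
          (hasDerivAt_evalP_insertNth i y t p).continuousAt
      · exact Continuous.rpow_const (by fun_prop) fun _ => Or.inr (by linarith)
    · intro t ht
      have hpos : 0 < A - t ^ 2 := by nlinarith [ht.1, ht.2]
      refine (hasDerivAt_evalP_insertNth i y t p).mul ?_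
      have h1 : HasDerivAt (fun t : ℝ => A - t ^ 2) (-(2 * t)) t := by
        simpa using (hasDerivAt_pow 2 t).const_sub A
      simpa using h1.rpow_const (p := μ + 1) (Or.inl hpos.ne')
  · exact intervalIntegral.integral_undef hInt

/-- Integration by parts in the `i`-th coordinate. -/
lemma wInt_pderiv {d : ℕ} (hd : 2 ≤ d) {μ : ℝ} (hμ : -1 < μ) (i : Fin d)
    (p : MvPolynomial (Fin d) ℝ) :
    wInt hd hμ ((1 - rsq d) * pderiv i p) = 2 * (μ + 1) * wInt hd hμ (X i * p) := by
  suffices h : wInt hd hμ ((1 - rsq d) * pderiv i p - (2 * (μ + 1)) • (X i * p)) = 0 by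
    rw [map_sub, map_smul, smul_eq_mul] at h
    linarith
  obtain ⟨d, rfl⟩ : ∃ e, d = e + 1 := ⟨d - 1, by omega⟩
  have hInt := (integrable_indicator_iff (isCompact_Bd (d + 1)).measurableSet).2
    (integrableOn_evalP_mul hd hμ ((1 - rsq (d + 1)) * pderiv i p - (2 * (μ + 1)) • (X i * p)))
  have hfun : (fun x => evalP ((1 - rsq (d + 1)) * pderiv i p - (2 * (μ + 1)) • (X i * p)) x
      * Wmu (d + 1) μ x) = fun x => (evalP (pderiv i p) x * (1 - eunorm x ^ 2)
      - 2 * (μ + 1) * (x i * evalP p x)) * Wmu (d + 1) μ x := by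
    funext x
    rw [eunorm_sq]
    simp only [evalP, rsq, map_sub, map_mul, map_one, map_sum, map_pow, eval_X, smul_eval]
    ring
  rw [wInt_apply, ← integral_indicator (isCompact_Bd (d + 1)).measurableSet, hfun]
  rw [hfun] at hInt
  have hmp := (volume_preserving_piFinSuccAbove (fun _ : Fin (d + 1) => ℝ) i).symm
  rw [← hmp.integral_comp (MeasurableEquiv.measurableEmbedding _)]
  rw [← hmp.integrable_comp_emb (MeasurableEquiv.measurableEmbedding _)] at hInt
  erw [integral_prod_symm _ hInt]
  refine integral_eq_zero_of_ae (Filter.Eventually.of_forall fun y => ?_)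
  exact slice_integral_eq_zero hμ i p y

/-! ### Green's identity and the theorem -/

/-- Green's identity for `T`. -/
lemma wInt_negL_mul {d : ℕ} (hd : 2 ≤ d) {μ : ℝ} (hμ : -1 < μ) (f g : MvPolynomial (Fin d) ℝ) :
    wInt hd hμ (negL d μ f * g) = ∑ i, wInt hd hμ ((1 - rsq d) * (pderiv i f * pderiv i g)) := by
  have h : ∀ i, wInt hd hμ ((1 - rsq d) * (pderiv i f * pderiv i g))
      = wInt hd hμ ((2 * (μ + 1)) • (X i * pderiv i f * g)
        - (1 - rsq d) * pderiv i (pderiv i f) * g) := by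
    intro i
    have h1 := wInt_pderiv hd hμ i (pderiv i f * g)
    rw [pderiv_mul, mul_add, map_add, ← mul_assoc (X i), ← mul_assoc (1 - rsq d) _ g] at h1
    rw [map_sub, map_smul, smul_eq_mul]
    linarith
  rw [Finset.sum_congr rfl fun i _ => h i, ← map_sum, Finset.sum_sub_distrib, negL_apply,
    euler_apply, lapl_apply, ← Finset.smul_sum, ← Finset.sum_mul, ← Finset.sum_mul,
    ← Finset.mul_sum, sub_mul, smul_mul_assoc]

lemma sqNormMu_evalP {d : ℕ} (hd : 2 ≤ d) {μ : ℝ} (hμ : -1 < μ) (f : MvPolynomial (Fin d) ℝ) :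
    sqNormMu d μ (evalP f) = wInt hd hμ (f * f) := by
  rw [wInt_apply, sqNormMu]
  congr 1
  funext x
  simp [evalP, sq]

lemma sum_sqNormMu {d : ℕ} (hd : 2 ≤ d) {μ : ℝ} (hμ : -1 < μ) (f : MvPolynomial (Fin d) ℝ) :
    (∑ i, sqNormMu d μ (fun x => Real.sqrt (1 - eunorm x ^ 2) * evalP (pderiv i f) x))
      = wInt hd hμ (negL d μ f * f) := by
  rw [wInt_negL_mul]
  refine Finset.sum_congr rfl fun i _ => ?_
  rw [wInt_apply, sqNormMu]
  refine setIntegral_congr_fun (isCompact_Bd d).measurableSet fun x hx => ?_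
  have h0 : 0 ≤ 1 - eunorm x ^ 2 := by
    rw [eunorm_sq]
    linarith [(mem_Bd_iff x).1 hx]
  have h1 : evalP ((1 - rsq d) * (pderiv i f * pderiv i f)) x
      = (1 - eunorm x ^ 2) * evalP (pderiv i f) x ^ 2 := by
    rw [eunorm_sq]
    simp only [evalP, rsq, map_sub, map_mul, map_one, map_sum, map_pow, eval_X]
    ring
  simp only [h1, mul_pow, Real.sq_sqrt h0]

/-- for odd `n`, the sharp `L²(W_μ,B^d)` Bernstein inequality
`Σ_i ‖√(1−‖x‖²) ∂_i f‖²_{μ,2} ≤ (n(n+2μ+d)−d+1)‖f‖²_{μ,2}`, with equality attained by a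
nonzero polynomial of degree `n`. -/
theorem stmt4 (d : ℕ) (hd : 2 ≤ d) (μ : ℝ) (hμ : -1 < μ) (n : ℕ) (hn1 : 1 ≤ n)
    (hn : Odd n) :
    (∀ f : MvPolynomial (Fin d) ℝ, f.totalDegree ≤ n →
      (∑ i, sqNormMu d μ (fun x => Real.sqrt (1 - eunorm x ^ 2) * evalP (pderiv i f) x))
        ≤ ((n : ℝ) * ((n : ℝ) + 2 * μ + d) - d + 1) * sqNormMu d μ (evalP f))
    ∧ (∃ f : MvPolynomial (Fin d) ℝ, f ≠ 0 ∧ f.totalDegree = n ∧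
      (∑ i, sqNormMu d μ (fun x => Real.sqrt (1 - eunorm x ^ 2) * evalP (pderiv i f) x))
        = ((n : ℝ) * ((n : ℝ) + 2 * μ + d) - d + 1) * sqNormMu d μ (evalP f)) := by
  refine ⟨fun f hf => ?_, ?_⟩
  · rw [sum_sqNormMu hd hμ, sqNormMu_evalP hd hμ]
    let T : restrictTotalDegree (Fin d) ℝ n →ₗ[ℝ] restrictTotalDegree (Fin d) ℝ n :=
      (negL d μ).restrict fun p hp => by
        rw [mem_restrictTotalDegree] at hp ⊢
        exact totalDegree_negL_le μ hp
    refine symm_bound (fun p q : restrictTotalDegree (Fin d) ℝ n => wInt hd hμ (p.1 * q.1))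
      (fun p q => by rw [mul_comm]) (fun p q r => ?_) (fun c p q => ?_) (fun p hp => ?_) T
      (fun p q => ?_) _ (fun p κ hp hκ => ?_) ⟨f, (mem_restrictTotalDegree _ _ _).2 hf⟩
    · rw [Submodule.coe_add, add_mul, map_add]
    · rw [Submodule.coe_smul, smul_mul_assoc, map_smul, smul_eq_mul]
    · exact wInt_sq_pos hd hμ fun h => hp (Subtype.ext h)
    · change wInt hd hμ (negL d μ p.1 * q.1) = wInt hd hμ (p.1 * negL d μ q.1)
      rw [mul_comm p.1, wInt_negL_mul, wInt_negL_mul]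
      simp only [mul_comm (pderiv _ p.1)]
    · exact negL_eigenvalue_le hd hμ hn (fun h => hp (Subtype.ext h))
        ((mem_restrictTotalDegree _ _ _).1 p.2) (congrArg Subtype.val hκ)
  · obtain ⟨f, hf0, hfn, hf⟩ := exists_extremal hd hμ hn
    refine ⟨f, hf0, hfn, ?_⟩
    rw [sum_sqNormMu hd hμ, sqNormMu_evalP hd hμ, hf, smul_mul_assoc, map_smul, smul_eq_mul]

end
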